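/- arXiv:1701.02804 — 2 statements merged into one kernel-verified Lean document; each statement's English description precedes it below -/
import Mathlib

section
/- Let 𝓘 be the dyadic interval set. Fix n ≥ 1, a convex set Θ ⊆ ℝ^n, T ≥ 1, and convex loss functions ℓ_t : Θ → ℝ for t = 1, …, T. For each I ∈ 𝓘 let (θ_t(I))_{t∈I} ⊆ Θ be the output sequence of a learner, and suppose there is a constant C > 0 such that for every I ∈ 𝓘 and every comparator sequence (θ_t)_{t∈I} ⊆ Θ one has Σ_{t∈I} (ℓ_t(θ_t(I)) − ℓ_t(θ_t)) ≤ C(1 + γ(I))√|I|, where γ(I) = Σ_{t∈I} ‖θ_{t+1} − θ_t‖. Define η_I = min{1/2, 1/√|I|} and ACT(t) = {I ∈ 𝓘 : t ∈ I}, and define weights recursively: for I = [q,s] ∈ 𝓘, w_q(I) = η_I and w_{t+1}(I) = w_t(I)(1 + η_I r_t(I)) for q ≤ t ≤ s, where the ensemble estimate is θ̂_t = (Σ_{I∈ACT(t)} w_t(I) θ_t(I)) / (Σ_{I∈ACT(t)} w_t(I)) and the estimated regret is r_t(I) = ℓ_t(θ̂_t) − ℓ_t(θ_t(I)). Assume |r_t(I)|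 ≤ 1 for all t and all I ∈ ACT(t). Then for every interval I = [q,s] ⊆ [1,T] and every comparator sequence (θ_t)_{t∈I} ⊆ Θ: Σ_{t∈I} (ℓ_t(θ̂_t) − ℓ_t(θ_t)) ≤ 8C(1 + γ(I))√|I| + 40 ln(s+1) √|I|. -/
/-!
*Regret against one dyadic learner.* Since `ℓ t` is convex, `∑ I ∈ ACT t, w I t * r I t ≤ 0`, so
the multiplicative update in round `t` does not increase the potential `∑ I ∈ ACT t, w I t / ηI`,
while the at most `t + 1` intervals that start at `t + 1` each add `1` to it. Hence the potential is
at most `t ^ 2` after round `t`. On the other hand `exp (x - x ^ 2) ≤ 1 + x` for `x ≥ -1/2` shows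
that at the end of `I` the learner of `I` alone contributes at least
`exp (ηI * ∑ r I - |I| * ηI ^ 2)`. Taking logarithms, `∑ r I` is at most
`(4 * log N + 1) * √|I|`, where `N` is the first time after `I`.

*From dyadic intervals to all intervals.* Cut `[a, b)`, with `2 ^ j ≤ b - a < 2 ^ (j + 1)`, at a
multiple of `2 ^ j`. From the cut outwards each side is a union of dyadic intervals of strictly
decreasing lengths, so the square roots of these lengths sum to a multiple of `√(b - a)`.
-/

open Finset

/-- The dyadic interval indexed by `(j, k)` (with `k ≥ 1`):
the integer interval `[k·2^j, (k+1)·2^j − 1]`, which has `2^j` elements. -/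
def dyadicI (j k : ℕ) : Finset ℕ := Finset.Icc (k * 2 ^ j) ((k + 1) * 2 ^ j - 1)

/-- `ACT t`: the (indices of the) dyadic intervals containing `t`.  Any dyadic
interval `(j, k)` containing `t ≥ 1` has `j ≤ log₂ t` and `1 ≤ k ≤ t`, so this
finite set is exactly `{I ∈ 𝓘 : t ∈ I}`. -/
def ACT (t : ℕ) : Finset (ℕ × ℕ) :=
  ((Finset.Iic (Nat.log 2 t)) ×ˢ (Finset.Icc 1 t)).filter fun p => t ∈ dyadicI p.1 p.2

/-- The OCELAD learning rate of a dyadic interval of length `2^j`: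
`η_I = min {1/2, 1/√|I|}`. -/
noncomputable def ηI (j : ℕ) : ℝ := min (1 / 2) (1 / Real.sqrt (2 ^ j))

section DyadicDecomposition

/-- The sum of `f` over each dyadic interval contained in `[a, b)` is at most `A` times the square
root of its length. The intervals are written `[x, x + 2 ^ j)` with `2 ^ j ∣ x`, as this form is
stable under translations and reflections by multiples of `2 ^ j`. -/
def DyadicSumBound (f : ℕ → ℝ) (A : ℝ) (a b : ℕ) : Prop :=
  ∀ j x, 2 ^ j ∣ x → a ≤ x → x + 2 ^ j ≤ b → ∑ t ∈ Ico x (x + 2 ^ j), f t ≤ A * √(2 ^ j)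

namespace DyadicSumBound

variable {f : ℕ → ℝ} {A : ℝ} {a b c j : ℕ}

theorem mono {a' b' : ℕ} (h : DyadicSumBound f A a b) (ha : a ≤ a') (hb : b' ≤ b) :
    DyadicSumBound f A a' b' :=
  fun i x hx hax hxb => h i x hx (ha.trans hax) (hxb.trans hb)

theorem comp_add_left (h : DyadicSumBound f A c b) (hc : 2 ^ j ∣ c) (hb : b - c < 2 ^ (j + 1)) :
    DyadicSumBound (fun t => f (c + t)) A 0 (b - c) := by
  intro i x hx _ hxb
  have hij : i < j + 1 := (Nat.pow_lt_pow_iff_right one_lt_two).1 (by omega)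
  have hic : 2 ^ i ∣ c := (pow_dvd_pow 2 (Nat.lt_succ_iff.1 hij)).trans hc
  rw [sum_Ico_add, add_right_comm]
  exact h i (x + c) (hx.add hic) (by omega) (by omega)

theorem reflect (h : DyadicSumBound f A a c) (hc : 2 ^ j ∣ c) (ha : c - a < 2 ^ (j + 1)) :
    DyadicSumBound (fun t => f (c - 1 - t)) A 0 (c - a) := by
  intro i x hx _ hxa
  have hij : i < j + 1 := (Nat.pow_lt_pow_iff_right one_lt_two).1 (by omega)
  have hic : 2 ^ i ∣ c := (pow_dvd_pow 2 (Nat.lt_succ_iff.1 hij)).trans hc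
  have hstart : c - 1 + 1 - (x + 2 ^ i) = c - (x + 2 ^ i) := by omega
  have hend : c - 1 + 1 - x = c - (x + 2 ^ i) + 2 ^ i := by omega
  rw [sum_Ico_reflect f x (by omega), hstart, hend]
  exact h i _ (Nat.dvd_sub hic (hx.add dvd_rfl)) (by omega) (by omega)

end DyadicSumBound

theorem exists_dvd_le_lt_add {d : ℕ} (hd : 0 < d) (a : ℕ) : ∃ c, d ∣ c ∧ a ≤ c ∧ c < a + d := by
  refine ⟨d * (a ⌈/⌉ d), dvd_mul_right _ _, le_smul_ceilDiv hd, ?_⟩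
  have hle : d * (a ⌈/⌉ d) ≤ a + d - 1 := Nat.mul_div_le (a + d - 1) d
  omega

/-- The least constant that could replace `5 / 2` here is `1 + √2`. -/
theorem sqrt_add_mul_sqrt_le {a b : ℝ} (hb : 0 ≤ b) (hab : b ≤ a) :
    √a + 5 / 2 * √b ≤ 5 / 2 * √(a + b) := by
  have hle : √b ≤ √a := Real.sqrt_le_sqrt hab
  have hb0 : 0 ≤ √b := Real.sqrt_nonneg b
  have hsq : (√a + 5 / 2 * √b) ^ 2 ≤ (5 / 2 * √(a + b)) ^ 2 := by
    have hprod : √b * √b ≤ √a * √b := mul_le_mul_of_nonneg_right hle hb0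
    nlinarith [Real.sq_sqrt hb, Real.sq_sqrt (hb.trans hab),
      Real.sq_sqrt (add_nonneg (hb.trans hab) hb)]
  exact (abs_le_of_sq_le_sq' hsq (by positivity)).2

namespace DyadicSumBound

variable {f : ℕ → ℝ} {A : ℝ} {a b c j m : ℕ}

theorem sum_range_le (hA : 0 ≤ A) (h : DyadicSumBound f A 0 m) :
    ∑ t ∈ range m, f t ≤ 5 / 2 * (A * √m) := by
  induction m using Nat.strong_induction_on generalizing f with | _ m ih =>
  rcases eq_or_ne m 0 with rfl | hm
  · simp
  obtain ⟨j, hlo, hhi⟩ := exists_nat_pow_near (Nat.one_le_iff_ne_zero.2 hm) one_lt_two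
  obtain ⟨b, hb⟩ := Nat.exists_eq_add_of_le hlo
  have hpos : 0 < 2 ^ j := by positivity
  have hbj : b ≤ 2 ^ j := by rw [pow_succ] at hhi; omega
  have hhead : ∑ t ∈ range (2 ^ j), f t ≤ A * √(2 ^ j) := by
    simpa using h j 0 (dvd_zero _) le_rfl (by omega)
  have htail : ∑ t ∈ range b, f (2 ^ j + t) ≤ 5 / 2 * (A * √b) := by
    have hshift := (h.mono (Nat.zero_le (2 ^ j)) le_rfl).comp_add_left dvd_rfl (by omega)
    rw [hb, Nat.add_sub_cancel_left] at hshift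
    exact ih b (by omega) hshift
  calc ∑ t ∈ range m, f t
      = ∑ t ∈ range (2 ^ j), f t + ∑ t ∈ range b, f (2 ^ j + t) := by rw [hb, sum_range_add]
    _ ≤ A * √(2 ^ j) + 5 / 2 * (A * √b) := add_le_add hhead htail
    _ = A * (√(2 ^ j) + 5 / 2 * √b) := by ring
    _ ≤ A * (5 / 2 * √(2 ^ j + b)) := by
      gcongr
      exact sqrt_add_mul_sqrt_le (by positivity) (by exact_mod_cast hbj)
    _ = 5 / 2 * (A * √m) := by rw [hb]; push_cast; ring

theorem sum_Ico_le_of_dvd_right (hA : 0 ≤ A) (h : DyadicSumBound f A a c) (hc : 2 ^ j ∣ c)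
    (ha : c - a < 2 ^ (j + 1)) : ∑ t ∈ Ico a c, f t ≤ 5 / 2 * (A * √(c - a : ℕ)) := by
  have hrefl : ∑ t ∈ Ico a c, f t = ∑ t ∈ range (c - a), f (c - 1 - t) := by
    rw [sum_Ico_eq_sum_range, ← sum_range_reflect]
    refine sum_congr rfl fun t ht => congrArg f ?_
    rw [mem_range] at ht
    omega
  rw [hrefl]
  exact (h.reflect hc ha).sum_range_le hA

theorem sum_Ico_le_of_dvd_left (hA : 0 ≤ A) (h : DyadicSumBound f A c b) (hc : 2 ^ j ∣ c)
    (hb : b - c < 2 ^ (j + 1)) : ∑ t ∈ Ico c b, f t ≤ 5 / 2 * (A * √(b - c : ℕ)) := by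
  rw [sum_Ico_eq_sum_range]
  exact (h.comp_add_left hc hb).sum_range_le hA

theorem sum_Ico_le (hA : 0 ≤ A) (h : DyadicSumBound f A a b) :
    ∑ t ∈ Ico a b, f t ≤ 5 * (A * √(b - a : ℕ)) := by
  rcases Nat.eq_zero_or_pos (b - a) with hab | hab
  · simp [Ico_eq_empty_of_le (Nat.sub_eq_zero_iff_le.1 hab), hab]
  obtain ⟨j, hlo, hhi⟩ := exists_nat_pow_near (Nat.succ_le_of_lt hab) one_lt_two
  obtain ⟨c, hc, hac, hca⟩ := exists_dvd_le_lt_add (d := 2 ^ j) (by positivity) a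
  have hleft := (h.mono le_rfl (by omega)).sum_Ico_le_of_dvd_right hA hc (by omega)
  have hright := (h.mono hac le_rfl).sum_Ico_le_of_dvd_left hA hc (by omega)
  calc ∑ t ∈ Ico a b, f t
      = ∑ t ∈ Ico a c, f t + ∑ t ∈ Ico c b, f t :=
        (sum_Ico_consecutive f hac (by omega)).symm
    _ ≤ 5 / 2 * (A * √(c - a : ℕ)) + 5 / 2 * (A * √(b - c : ℕ)) := add_le_add hleft hright
    _ ≤ 5 / 2 * (A * √(b - a : ℕ)) + 5 / 2 * (A * √(b - a : ℕ)) := by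
      gcongr; omega
    _ = 5 * (A * √(b - a : ℕ)) := by ring

end DyadicSumBound

end DyadicDecomposition

section ActiveIntervals

theorem mem_dyadicI {t j k : ℕ} : t ∈ dyadicI j k ↔ k * 2 ^ j ≤ t ∧ t < k * 2 ^ j + 2 ^ j := by
  have hpos : 0 < 2 ^ j := by positivity
  rw [dyadicI, mem_Icc, add_one_mul]
  omega

theorem dyadicI_eq_Ico (j k : ℕ) : dyadicI j k = Ico (k * 2 ^ j) (k * 2 ^ j + 2 ^ j) := by
  ext t
  rw [mem_dyadicI, mem_Ico]

theorem two_pow_le_of_mem_dyadicI {t j k : ℕ} (hk : 1 ≤ k) (ht : t ∈ dyadicI j k) : 2 ^ j ≤ t :=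
  (Nat.le_mul_of_pos_left _ hk).trans (mem_dyadicI.1 ht).1

theorem mem_ACT {t j k : ℕ} : (j, k) ∈ ACT t ↔ 1 ≤ k ∧ t ∈ dyadicI j k := by
  simp only [ACT, mem_filter, mem_product, mem_Iic, mem_Icc]
  refine ⟨fun h => ⟨h.1.2.1, h.2⟩, fun ⟨hk, ht⟩ => ⟨⟨?_, hk, ?_⟩, ht⟩⟩
  · exact Nat.le_log_of_pow_le one_lt_two (two_pow_le_of_mem_dyadicI hk ht)
  · exact (Nat.le_mul_of_pos_right k (by positivity)).trans (mem_dyadicI.1 ht).1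

theorem ACT_nonempty {t : ℕ} (ht : 1 ≤ t) : (ACT t).Nonempty :=
  ⟨(0, t), mem_ACT.2 ⟨ht, mem_dyadicI.2 (by simp)⟩⟩

theorem ACT_zero : ACT 0 = ∅ := by simp [ACT]

theorem card_ACT_le (t : ℕ) : #(ACT t) ≤ t := by
  have hsub : ACT t ⊆ (range t).image fun j => (j, t / 2 ^ j) := by
    rintro ⟨j, k⟩ hI
    obtain ⟨hk, ht⟩ := mem_ACT.1 hI
    have hj : j < t := Nat.lt_two_pow_self.trans_le (two_pow_le_of_mem_dyadicI hk ht)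
    have hdiv : t / 2 ^ j = k := by
      rw [mem_dyadicI, ← add_one_mul] at ht
      exact Nat.div_eq_of_lt_le ht.1 ht.2
    exact mem_image.2 ⟨j, mem_range.2 hj, by rw [hdiv]⟩
  simpa using (card_le_card hsub).trans card_image_le

theorem eq_start_of_mem_ACT_succ_sdiff {t j k : ℕ} (h : (j, k) ∈ ACT (t + 1) \ ACT t) :
    t + 1 = k * 2 ^ j := by
  simp only [mem_sdiff, mem_ACT, mem_dyadicI] at h
  omega

end ActiveIntervals

section LearningRate

theorem ηI_pos (j : ℕ) : 0 < ηI j := by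
  unfold ηI; positivity

theorem abs_ηI_le_half (j : ℕ) : |ηI j| ≤ 1 / 2 :=
  (abs_of_pos (ηI_pos j)).trans_le (min_le_left _ _)

theorem two_pow_mul_ηI_le (j : ℕ) : 2 ^ j * ηI j ≤ √(2 ^ j) :=
  calc 2 ^ j * ηI j ≤ 2 ^ j * (1 / √(2 ^ j)) := by gcongr; exact min_le_right _ _
    _ = √(2 ^ j) := by rw [mul_one_div, Real.div_sqrt]

theorem inv_ηI_le (j : ℕ) : (ηI j)⁻¹ ≤ 2 * √(2 ^ j) := by
  have hone : 1 ≤ √((2 : ℝ) ^ j) := Real.one_le_sqrt.2 (one_le_pow₀ one_le_two)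
  refine inv_le_of_inv_le₀ (by positivity) (le_min ?_ ?_)
  · rw [← one_div]; gcongr; linarith
  · rw [← one_div]; gcongr; linarith

theorem le_log_mul_sqrt_of_exp_le_sq {j : ℕ} {S N : ℝ} (hN : 2 ≤ N)
    (h : Real.exp (ηI j * S - 2 ^ j * ηI j ^ 2) ≤ N ^ 2) : S ≤ 6 * Real.log N * √(2 ^ j) := by
  have hη := ηI_pos j
  have hlog : 1 ≤ 2 * Real.log N := by
    linarith [Real.log_le_log two_pos hN, Real.log_two_gt_d9]
  have hexp : ηI j * S - 2 ^ j * ηI j ^ 2 ≤ 2 * Real.log N := by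
    simpa using (Real.le_log_iff_exp_le (by positivity)).2 h
  calc S = (ηI j * S - 2 ^ j * ηI j ^ 2) * (ηI j)⁻¹ + 2 ^ j * ηI j := by field_simp; ring
    _ ≤ 2 * Real.log N * (2 * √(2 ^ j)) + 1 * √(2 ^ j) := by
      rw [one_mul]; gcongr
      · exact inv_ηI_le j
      · exact two_pow_mul_ηI_le j
    _ ≤ 2 * Real.log N * (2 * √(2 ^ j)) + 2 * Real.log N * √(2 ^ j) := by gcongr
    _ = 6 * Real.log N * √(2 ^ j) := by ring

end LearningRate

section MultiplicativeWeights

theorem exp_sub_sq_le_one_add {x : ℝ} (hx : -(1 / 2) ≤ x) : Real.exp (x - x ^ 2) ≤ 1 + x := by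
  suffices h : 1 ≤ (1 + x) * Real.exp (x ^ 2 - x) by
    rw [← neg_sub, Real.exp_neg]
    exact (inv_le_iff_one_le_mul₀ (Real.exp_pos _)).2 h
  rcases le_total 0 x with hpos | hneg
  · calc 1 ≤ 1 + x ^ 3 := by simpa using pow_nonneg hpos 3
      _ = (1 + x) * (x ^ 2 - x + 1) := by ring
      _ ≤ (1 + x) * Real.exp (x ^ 2 - x) := by gcongr; exact Real.add_one_le_exp _
  · have hfactor : 0 ≤ 1 + x - x ^ 2 + x ^ 3 := by
      have hcube : 0 ≤ x ^ 2 * (x + 1 / 2) := mul_nonneg (sq_nonneg x) (by linarith)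
      nlinarith
    calc 1 ≤ 1 + x ^ 2 * (1 + x - x ^ 2 + x ^ 3) / 2 := by
          linarith [mul_nonneg (sq_nonneg x) hfactor]
      _ = (1 + x) * (1 + (x ^ 2 - x) + (x ^ 2 - x) ^ 2 / 2) := by ring
      _ ≤ (1 + x) * Real.exp (x ^ 2 - x) := by
        gcongr
        · linarith
        · exact Real.quadratic_le_exp_of_nonneg (by nlinarith)

theorem exp_sum_le_prod_one_add {ι : Type*} {s : Finset ι} {r : ι → ℝ} {η : ℝ} (hη : |η| ≤ 1 / 2)
    (hr : ∀ i ∈ s, |r i| ≤ 1) :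
    Real.exp (η * ∑ i ∈ s, r i - #s * η ^ 2) ≤ ∏ i ∈ s, (1 + η * r i) := by
  have hsplit : η * ∑ i ∈ s, r i - #s * η ^ 2 = ∑ i ∈ s, (η * r i - η ^ 2) := by
    rw [sum_sub_distrib, sum_const, nsmul_eq_mul, mul_sum]
  rw [hsplit, Real.exp_sum]
  refine prod_le_prod (fun _ _ => (Real.exp_pos _).le) fun i hi => ?_
  have hstep : |η * r i| ≤ 1 / 2 := by
    rw [abs_mul]
    exact (mul_le_of_le_one_right (abs_nonneg η) (hr i hi)).trans hη
  refine le_trans (Real.exp_le_exp.2 ?_) (exp_sub_sq_le_one_add (abs_le.1 hstep).1)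
  have hsq : r i ^ 2 ≤ 1 := (sq_le_one_iff_abs_le_one _).2 (hr i hi)
  nlinarith [mul_le_mul_of_nonneg_left hsq (sq_nonneg η)]

theorem sum_mul_map_centerMass_sub_nonpos {E ι : Type*} [AddCommGroup E] [Module ℝ E] {Θ : Set E}
    {f : E → ℝ} (hf : ConvexOn ℝ Θ f) {s : Finset ι} {w : ι → ℝ} {z : ι → E}
    (hw : ∀ i ∈ s, 0 ≤ w i) (hpos : 0 < ∑ i ∈ s, w i) (hz : ∀ i ∈ s, z i ∈ Θ) :
    ∑ i ∈ s, w i * (f (s.centerMass w z) - f (z i)) ≤ 0 := by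
  have hJensen : f (s.centerMass w z) ≤ s.centerMass w (f ∘ z) := hf.map_centerMass_le hw hpos hz
  simp only [centerMass, smul_eq_mul, Function.comp_apply, inv_mul_eq_div] at hJensen
  rw [le_div_iff₀' hpos] at hJensen
  simp only [mul_sub, sum_sub_distrib, ← sum_mul]
  exact sub_nonpos.2 hJensen

/-- `w` are the OCELAD weights driven by the estimated regrets `r`: the weight of the dyadic
interval `(j, k)` starts at `ηI j` at time `k * 2 ^ j`, is multiplied by `1 + ηI j * r (j, k) t` in
each round `t` of the interval, and the estimated regrets are normalized to `[-1, 1]`. -/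
structure IsOceladWeights (w r : ℕ × ℕ → ℕ → ℝ) : Prop where
  init : ∀ j k, 1 ≤ k → w (j, k) (k * 2 ^ j) = ηI j
  update : ∀ j k, 1 ≤ k → ∀ t ∈ dyadicI j k,
    w (j, k) (t + 1) = w (j, k) t * (1 + ηI j * r (j, k) t)
  abs_regret_le_one : ∀ t, 1 ≤ t → ∀ I ∈ ACT t, |r I t| ≤ 1

/-- The potential after round `t`: the weights are those of time `t + 1`, but the intervals are the
ones active at `t`, so that the final weight of an interval ending at `t` is still counted. -/
noncomputable def potential (w : ℕ × ℕ → ℕ → ℝ) (t : ℕ) : ℝ :=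
  ∑ I ∈ ACT t, w I (t + 1) / ηI I.1

namespace IsOceladWeights

variable {w r : ℕ × ℕ → ℕ → ℝ} {j k t : ℕ}

theorem abs_regret_le_one_of_mem_dyadicI (h : IsOceladWeights w r) (hk : 1 ≤ k)
    (ht : t ∈ dyadicI j k) : |r (j, k) t| ≤ 1 :=
  h.abs_regret_le_one t (Nat.one_le_two_pow.trans (two_pow_le_of_mem_dyadicI hk ht)) _
    (mem_ACT.2 ⟨hk, ht⟩)

theorem weight_eq_mul_prod (h : IsOceladWeights w r) (hk : 1 ≤ k) {m : ℕ} (hm : m ≤ 2 ^ j) :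
    w (j, k) (k * 2 ^ j + m) =
      ηI j * ∏ t ∈ Ico (k * 2 ^ j) (k * 2 ^ j + m), (1 + ηI j * r (j, k) t) := by
  induction m with
  | zero => simp [h.init j k hk]
  | succ m ih =>
    rw [← add_assoc, h.update j k hk _ (mem_dyadicI.2 (by omega)), ih (by omega),
      prod_Ico_succ_top (by omega), mul_assoc]

theorem exp_sum_regret_le_weight_div (h : IsOceladWeights w r) (hk : 1 ≤ k) {m : ℕ}
    (hm : m ≤ 2 ^ j) :
    Real.exp (ηI j * ∑ t ∈ Ico (k * 2 ^ j) (k * 2 ^ j + m), r (j, k) t - m * ηI j ^ 2) ≤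
      w (j, k) (k * 2 ^ j + m) / ηI j := by
  rw [h.weight_eq_mul_prod hk hm, mul_div_cancel_left₀ _ (ηI_pos j).ne']
  have hbound : ∀ t ∈ Ico (k * 2 ^ j) (k * 2 ^ j + m), |r (j, k) t| ≤ 1 := by
    intro t ht
    rw [mem_Ico] at ht
    exact h.abs_regret_le_one_of_mem_dyadicI hk (mem_dyadicI.2 (by omega))
  simpa using exp_sum_le_prod_one_add (abs_ηI_le_half j) hbound

theorem weight_div_pos (h : IsOceladWeights w r) (hk : 1 ≤ k) (hstart : k * 2 ^ j ≤ t)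
    (hend : t ≤ k * 2 ^ j + 2 ^ j) : 0 < w (j, k) t / ηI j := by
  obtain ⟨m, rfl⟩ := Nat.exists_eq_add_of_le hstart
  exact (Real.exp_pos _).trans_le (h.exp_sum_regret_le_weight_div hk (by omega))

theorem weight_pos_of_mem_ACT (h : IsOceladWeights w r) {I : ℕ × ℕ} (hI : I ∈ ACT t) :
    0 < w I t := by
  obtain ⟨hk, ht⟩ := mem_ACT.1 hI
  rw [mem_dyadicI] at ht
  exact (div_pos_iff_of_pos_right (ηI_pos _)).1 (h.weight_div_pos hk ht.1 ht.2.le)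

theorem weight_succ_div_pos_of_mem_ACT (h : IsOceladWeights w r) {I : ℕ × ℕ} (hI : I ∈ ACT t) :
    0 < w I (t + 1) / ηI I.1 := by
  obtain ⟨hk, ht⟩ := mem_ACT.1 hI
  rw [mem_dyadicI] at ht
  exact h.weight_div_pos hk (by omega) (by omega)

theorem potential_eq (h : IsOceladWeights w r) (t : ℕ) :
    potential w t = ∑ I ∈ ACT t, w I t / ηI I.1 + ∑ I ∈ ACT t, w I t * r I t := by
  rw [potential, ← sum_add_distrib]
  refine sum_congr rfl ?_
  rintro ⟨j, k⟩ hI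
  obtain ⟨hk, ht⟩ := mem_ACT.1 hI
  have hη := (ηI_pos j).ne'
  rw [h.update j k hk t ht]
  field_simp

theorem sum_weight_div_succ_le (h : IsOceladWeights w r) (t : ℕ) :
    ∑ I ∈ ACT (t + 1), w I (t + 1) / ηI I.1 ≤ potential w t + (t + 1) := by
  have hold : ∑ I ∈ ACT (t + 1) ∩ ACT t, w I (t + 1) / ηI I.1 ≤ potential w t :=
    sum_le_sum_of_subset_of_nonneg inter_subset_right
      fun I hI _ => (h.weight_succ_div_pos_of_mem_ACT hI).le
  have hweight : ∀ I ∈ ACT (t + 1) \ ACT t, w I (t + 1) / ηI I.1 = 1 := by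
    rintro ⟨j, k⟩ hI
    rw [eq_start_of_mem_ACT_succ_sdiff hI, h.init j k (mem_ACT.1 (mem_sdiff.1 hI).1).1,
      div_self (ηI_pos j).ne']
  have hnew : ∑ I ∈ ACT (t + 1) \ ACT t, w I (t + 1) / ηI I.1 ≤ t + 1 := by
    rw [sum_congr rfl hweight, sum_const, nsmul_eq_mul, mul_one]
    exact_mod_cast (card_le_card sdiff_subset).trans (card_ACT_le (t + 1))
  rw [← sum_inter_add_sum_sdiff (ACT (t + 1)) (ACT t)]
  exact add_le_add hold hnew

variable (hneg : ∀ t, 1 ≤ t → ∑ I ∈ ACT t, w I t * r I t ≤ 0)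
include hneg

theorem potential_le_sq (h : IsOceladWeights w r) (t : ℕ) : potential w t ≤ (t : ℝ) ^ 2 := by
  induction t with
  | zero => simp [potential, ACT_zero]
  | succ t ih =>
    calc potential w (t + 1)
        ≤ ∑ I ∈ ACT (t + 1), w I (t + 1) / ηI I.1 := by
          rw [h.potential_eq]
          exact add_le_of_nonpos_right (hneg _ (by omega))
      _ ≤ potential w t + (t + 1) := h.sum_weight_div_succ_le t
      _ ≤ (t : ℝ) ^ 2 + (t + 1) := by gcongr
      _ ≤ ((t + 1 : ℕ) : ℝ) ^ 2 := by push_cast; nlinarith [t.cast_nonneg (α := ℝ)]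

theorem sum_regret_le (h : IsOceladWeights w r) (hk : 1 ≤ k) :
    ∑ t ∈ dyadicI j k, r (j, k) t ≤ 6 * Real.log (k * 2 ^ j + 2 ^ j) * √(2 ^ j) := by
  have hpos : 1 ≤ 2 ^ j := Nat.one_le_two_pow
  have hstart : 2 ^ j ≤ k * 2 ^ j := Nat.le_mul_of_pos_left _ hk
  obtain ⟨e, he⟩ : ∃ e, k * 2 ^ j + 2 ^ j = e + 1 := Nat.exists_eq_succ_of_ne_zero (by omega)
  have hmem : (j, k) ∈ ACT e := mem_ACT.2 ⟨hk, mem_dyadicI.2 (by omega)⟩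
  have hcast : (k * 2 ^ j + 2 ^ j : ℝ) = e + 1 := by exact_mod_cast he
  have htwo : (2 : ℝ) ≤ e + 1 := by norm_cast; omega
  rw [hcast]
  refine le_log_mul_sqrt_of_exp_le_sq htwo ?_
  calc Real.exp (ηI j * ∑ t ∈ dyadicI j k, r (j, k) t - 2 ^ j * ηI j ^ 2)
      ≤ w (j, k) (e + 1) / ηI j := by
        simpa [dyadicI_eq_Ico, he] using h.exp_sum_regret_le_weight_div hk (le_refl (2 ^ j))
    _ ≤ potential w e :=
        single_le_sum (f := fun I => w I (e + 1) / ηI I.1)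
          (fun I hI => (h.weight_succ_div_pos_of_mem_ACT hI).le) hmem
    _ ≤ (e : ℝ) ^ 2 := h.potential_le_sq hneg e
    _ ≤ (e + 1 : ℝ) ^ 2 := by gcongr; linarith

end IsOceladWeights

/-- `x` plays the role of the losses of the ensemble, `y I` of those of the learner of `I`, and `c`
of those of the comparator. -/
theorem IsOceladWeights.sum_sub_le {w y : ℕ × ℕ → ℕ → ℝ} {x c : ℕ → ℝ} {B : ℝ} {q s : ℕ}
    (h : IsOceladWeights w fun I t => x t - y I t)
    (hneg : ∀ t, 1 ≤ t → ∑ I ∈ ACT t, w I t * (x t - y I t) ≤ 0) (hB : 0 ≤ B) (hq : 1 ≤ q)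
    (hqs : q ≤ s)
    (hbase : ∀ j k, 1 ≤ k → dyadicI j k ⊆ Icc q s →
      ∑ t ∈ dyadicI j k, (y (j, k) t - c t) ≤ B * √(2 ^ j)) :
    ∑ t ∈ Icc q s, (x t - c t) ≤ 5 * ((B + 6 * Real.log (s + 1)) * √((s : ℝ) - q + 1)) := by
  have hlog : 0 ≤ Real.log ((s : ℝ) + 1) := Real.log_nonneg (by simp)
  have hdyadic : DyadicSumBound (fun t => x t - c t) (B + 6 * Real.log (s + 1)) q (s + 1) := by
    rintro j _ ⟨k, rfl⟩ hqk hks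
    rw [mul_comm] at hqk hks ⊢
    have hk : 1 ≤ k := Nat.pos_of_mul_pos_right (hq.trans hqk)
    have hsub : dyadicI j k ⊆ Icc q s := by
      intro t ht
      rw [mem_dyadicI] at ht
      rw [mem_Icc]
      omega
    have hend : (k * 2 ^ j + 2 ^ j : ℝ) ≤ s + 1 := by exact_mod_cast hks
    rw [← dyadicI_eq_Ico]
    calc ∑ t ∈ dyadicI j k, (x t - c t)
        = ∑ t ∈ dyadicI j k, (y (j, k) t - c t) + ∑ t ∈ dyadicI j k, (x t - y (j, k) t) := by
          rw [← sum_add_distrib]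
          exact sum_congr rfl fun t _ => by ring
      _ ≤ B * √(2 ^ j) + 6 * Real.log (k * 2 ^ j + 2 ^ j) * √(2 ^ j) :=
          add_le_add (hbase j k hk hsub) (h.sum_regret_le hneg hk)
      _ ≤ B * √(2 ^ j) + 6 * Real.log (s + 1) * √(2 ^ j) := by gcongr
      _ = (B + 6 * Real.log (s + 1)) * √(2 ^ j) := by ring
  have hlen : ((s + 1 - q : ℕ) : ℝ) = s - q + 1 := by
    rw [Nat.cast_sub (by omega)]; push_cast; ring
  rw [← hlen, ← Ico_add_one_right_eq_Icc]
  exact hdyadic.sum_Ico_le (by positivity)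

end MultiplicativeWeights

theorem ocelad_strongly_adaptive_dynamic_regret_general {E : Type*} [SeminormedAddCommGroup E]
    [NormedSpace ℝ E] {Θ : Set E} {ℓ : ℕ → E → ℝ} (hℓ : ∀ t, ConvexOn ℝ Θ (ℓ t))
    {θL : ℕ × ℕ → ℕ → E} (hθL : ∀ j k, 1 ≤ k → ∀ t ∈ dyadicI j k, θL (j, k) t ∈ Θ)
    {C : ℝ} (hC : 0 ≤ C) {comp : ℕ → E}
    (hbase : ∀ j k, 1 ≤ k → ∑ t ∈ dyadicI j k, (ℓ t (θL (j, k) t) - ℓ t (comp t)) ≤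
      C * (1 + ∑ t ∈ dyadicI j k, ‖comp (t + 1) - comp t‖) * √(2 ^ j))
    {w : ℕ × ℕ → ℕ → ℝ} {θhat : ℕ → E}
    (hθhat : ∀ t, 1 ≤ t → θhat t = (ACT t).centerMass (w · t) (θL · t))
    (hw : IsOceladWeights w fun I t => ℓ t (θhat t) - ℓ t (θL I t))
    {q s : ℕ} (hq : 1 ≤ q) (hqs : q ≤ s) :
    ∑ t ∈ Icc q s, (ℓ t (θhat t) - ℓ t (comp t)) ≤
      5 * C * (1 + ∑ t ∈ Icc q s, ‖comp (t + 1) - comp t‖) * √((s : ℝ) - q + 1) +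
        30 * Real.log ((s : ℝ) + 1) * √((s : ℝ) - q + 1) := by
  have hneg : ∀ t, 1 ≤ t → ∑ I ∈ ACT t, w I t * (ℓ t (θhat t) - ℓ t (θL I t)) ≤ 0 := by
    intro t ht
    rw [hθhat t ht]
    exact sum_mul_map_centerMass_sub_nonpos (hℓ t) (fun I hI => (hw.weight_pos_of_mem_ACT hI).le)
      (sum_pos (fun I hI => hw.weight_pos_of_mem_ACT hI) (ACT_nonempty ht))
      fun I hI => hθL I.1 I.2 (mem_ACT.1 hI).1 t (mem_ACT.1 hI).2
  refine (hw.sum_sub_le (B := C * (1 + ∑ t ∈ Icc q s, ‖comp (t + 1) - comp t‖)) hneg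
    (by positivity) hq hqs fun j k hk hsub => (hbase j k hk).trans ?_).trans_eq (by ring)
  gcongr

/-- **Theorem 1 (General OCELAD Regret Framework).**
Given convex losses `ℓ_t` on a convex set `Θ ⊆ ℝ^n`, an ensemble of learners on
the dyadic intervals whose dynamic regret on `I` is at most `C(1 + γ(I))√|I|`,
and the OCELAD multiplicative-weight combination `θ̂_t` of the active learners
(with estimated regrets `r_t(I) = ℓ_t(θ̂_t) − ℓ_t(θ_t(I))` assumed to satisfy
`|r_t(I)| ≤ 1`), the ensemble estimate satisfies, on every interval
`I = [q,s] ⊆ [1,T]` and against every comparator sequence in `Θ`,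
`∑_{t∈I} (ℓ_t(θ̂_t) − ℓ_t(θ_t)) ≤ 8C(1 + γ(I))√|I| + 40 ln(s+1) √|I|`. -/
theorem ocelad_strongly_adaptive_dynamic_regret
    (n : ℕ) (hn : 1 ≤ n)
    (Θ : Set (EuclideanSpace ℝ (Fin n))) (hΘ : Convex ℝ Θ)
    (T : ℕ) (hT : 1 ≤ T)
    (ℓ : ℕ → EuclideanSpace ℝ (Fin n) → ℝ)
    (hℓconv : ∀ t, ConvexOn ℝ Θ (ℓ t))
    -- the learners' output sequences, lying in `Θ`
    (θL : ℕ × ℕ → ℕ → EuclideanSpace ℝ (Fin n))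
    (hθL : ∀ j k, 1 ≤ k → ∀ t ∈ dyadicI j k, θL (j, k) t ∈ Θ)
    -- the per-interval dynamic regret bound for the ensemble of learners
    (C : ℝ) (hC : 0 < C)
    (hbase : ∀ j k, 1 ≤ k → ∀ comp : ℕ → EuclideanSpace ℝ (Fin n),
      (∀ t, comp t ∈ Θ) →
      (∑ t ∈ dyadicI j k, (ℓ t (θL (j, k) t) - ℓ t (comp t))) ≤
        C * (1 + ∑ t ∈ dyadicI j k, ‖comp (t + 1) - comp t‖) *
          Real.sqrt ((2 : ℝ) ^ j))
    -- the OCELAD weights, ensemble estimate, and estimated regrets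
    (w : ℕ × ℕ → ℕ → ℝ) (θhat : ℕ → EuclideanSpace ℝ (Fin n))
    (r : ℕ × ℕ → ℕ → ℝ)
    (hθhat : ∀ t, 1 ≤ t →
      θhat t = (∑ I ∈ ACT t, w I t)⁻¹ • ∑ I ∈ ACT t, w I t • θL I t)
    (hr : ∀ I t, r I t = ℓ t (θhat t) - ℓ t (θL I t))
    (hw_init : ∀ j k, 1 ≤ k → w (j, k) (k * 2 ^ j) = ηI j)
    (hw_rec : ∀ j k, 1 ≤ k → ∀ t ∈ dyadicI j k,
      w (j, k) (t + 1) = w (j, k) t * (1 + ηI j * r (j, k) t))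
    -- the estimated regrets are normalized to lie in `[−1, 1]`
    (hrbound : ∀ t, 1 ≤ t → ∀ I ∈ ACT t, |r I t| ≤ 1) :
    ∀ q s : ℕ, 1 ≤ q → q ≤ s → s ≤ T →
      ∀ comp : ℕ → EuclideanSpace ℝ (Fin n), (∀ t, comp t ∈ Θ) →
        (∑ t ∈ Finset.Icc q s, (ℓ t (θhat t) - ℓ t (comp t))) ≤
          8 * C * (1 + ∑ t ∈ Finset.Icc q s, ‖comp (t + 1) - comp t‖) *
              Real.sqrt ((s : ℝ) - q + 1) +
            40 * Real.log ((s : ℝ) + 1) * Real.sqrt ((s : ℝ) - q + 1) := by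
  intro q s hq hqs _ comp hcomp
  obtain rfl : r = fun I t => ℓ t (θhat t) - ℓ t (θL I t) := funext₂ hr
  refine (ocelad_strongly_adaptive_dynamic_regret_general hℓconv hθL hC.le
    (fun j k hk => hbase j k hk comp hcomp) hθhat ⟨hw_init, hw_rec, hrbound⟩ hq hqs).trans ?_
  have hlog : 0 ≤ Real.log ((s : ℝ) + 1) := Real.log_nonneg (by simp)
  gcongr <;> norm_num
end

section
/- For any integers 1 ≤ q ≤ s, the interval [q,s] ⊆ ℕ can be partitioned into two finite sequences of disjoint and consecutive intervals (I_{−k}, …, I_0) and (I_1, …, I_p), all belonging to the dyadic interval set 𝓘 and covering [q,s] in left-to-right order, such that |I_{−i}| / |I_{−i+1}| ≤ 1/2 for all i ≥ 1 and |I_i| / |I_{i−1}| ≤ 1/2 for all i ≥ 2. -/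
/-!
Write the interval half-open, as `[q, T)` with `T = s + 1`. Let `v` be the 2-adic valuation. From
the left end `q` step up by `2 ^ v q`, the length of the longest dyadic interval starting there;
from the right end `T` step down by `2 ^ v T`. Each step strictly increases the valuation of the
endpoint it moves, so on either side the step lengths at least double on the way inwards. While
`q < T`, an endpoint of least valuation can step without overtaking the other one, because its step
length divides `T - q`; hence the two walks meet.
-/

/-- The right end of the longest dyadic interval `[n, n + 2 ^ j)` starting at `n`; for `n ≠ 0` its
length `ordProj[2] n` is the largest power of two dividing `n`. -/
def dyadicSucc (n : ℕ) : ℕ := n + ordProj[2] n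

/-- The left end of the longest dyadic interval `[n - 2 ^ j, n)` ending at `n`. -/
def dyadicPred (n : ℕ) : ℕ := n - ordProj[2] n

/-- The longest dyadic interval starting at `n`. A pair `(j, k)` encodes the interval
`[k * 2 ^ j, (k + 1) * 2 ^ j)`. -/
def dyadicFrom (n : ℕ) : ℕ × ℕ := (n.factorization 2, ordCompl[2] n)

/-- The longest dyadic interval ending at `n` (exclusive), encoded as in `dyadicFrom`. -/
def dyadicTo (n : ℕ) : ℕ × ℕ := (n.factorization 2, ordCompl[2] n - 1)

lemma dyadicFrom_lower (n : ℕ) : (dyadicFrom n).2 * 2 ^ (dyadicFrom n).1 = n :=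
  Nat.div_mul_cancel (Nat.ordProj_dvd n 2)

lemma dyadicFrom_upper (n : ℕ) :
    ((dyadicFrom n).2 + 1) * 2 ^ (dyadicFrom n).1 = dyadicSucc n := by
  rw [add_mul, one_mul, dyadicFrom_lower, dyadicSucc, dyadicFrom]

lemma dyadicTo_lower (n : ℕ) : (dyadicTo n).2 * 2 ^ (dyadicTo n).1 = dyadicPred n := by
  rw [dyadicTo, dyadicPred, Nat.sub_mul, one_mul, Nat.div_mul_cancel (Nat.ordProj_dvd n 2)]

lemma dyadicTo_upper {n : ℕ} (hn : n ≠ 0) : ((dyadicTo n).2 + 1) * 2 ^ (dyadicTo n).1 = n := by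
  rw [dyadicTo, Nat.sub_add_cancel (Nat.ordCompl_pos 2 hn),
    Nat.div_mul_cancel (Nat.ordProj_dvd n 2)]

lemma lt_dyadicSucc (n : ℕ) : n < dyadicSucc n := Nat.lt_add_of_pos_right (Nat.ordProj_pos n 2)

lemma dyadicPred_le (n : ℕ) : dyadicPred n ≤ n := Nat.sub_le _ _

lemma dyadicPred_lt {n : ℕ} (hn : n ≠ 0) : dyadicPred n < n :=
  Nat.sub_lt (Nat.pos_of_ne_zero hn) (Nat.ordProj_pos n 2)

section Valuation

variable {n a b : ℕ}

lemma odd_ordCompl_two (hn : n ≠ 0) : Odd (ordCompl[2] n) :=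
  Nat.not_even_iff_odd.mp fun h => Nat.not_dvd_ordCompl Nat.prime_two hn h.two_dvd

lemma factorization_two_lt_of_eq_mul (ha : a ≠ 0) (hb : Even b) (h : a = b * 2 ^ n) :
    n < a.factorization 2 := by
  rw [← Nat.succ_le_iff, ← Nat.prime_two.pow_dvd_iff_le_factorization ha, h, pow_succ']
  exact Nat.mul_dvd_mul_right hb.two_dvd _

lemma factorization_two_lt_dyadicSucc (hn : n ≠ 0) :
    n.factorization 2 < (dyadicSucc n).factorization 2 :=
  factorization_two_lt_of_eq_mul (Nat.ne_zero_of_lt (lt_dyadicSucc n))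
    (odd_ordCompl_two hn).add_one (dyadicFrom_upper n).symm

lemma factorization_two_lt_dyadicPred (hn : dyadicPred n ≠ 0) :
    n.factorization 2 < (dyadicPred n).factorization 2 :=
  factorization_two_lt_of_eq_mul hn
    (Nat.Odd.sub_odd (odd_ordCompl_two (by rintro rfl; exact hn (Nat.zero_sub _))) odd_one)
    (dyadicTo_lower n).symm

end Valuation

section Walks

variable {q T m p n : ℕ}

lemma dyadicSucc_le (hqT : q < T) (hv : q.factorization 2 ≤ T.factorization 2) :
    dyadicSucc q ≤ T := by
  have hdvd : ordProj[2] q ∣ T - q :=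
    Nat.dvd_sub ((pow_dvd_pow 2 hv).trans (Nat.ordProj_dvd T 2)) (Nat.ordProj_dvd q 2)
  have hle : ordProj[2] q ≤ T - q := Nat.le_of_dvd (Nat.sub_pos_of_lt hqT) hdvd
  unfold dyadicSucc
  omega

lemma le_dyadicPred (hqT : q < T) (hv : T.factorization 2 ≤ q.factorization 2) :
    q ≤ dyadicPred T := by
  have hdvd : ordProj[2] T ∣ T - q :=
    Nat.dvd_sub (Nat.ordProj_dvd T 2) ((pow_dvd_pow 2 hv).trans (Nat.ordProj_dvd q 2))
  have hle : ordProj[2] T ≤ T - q := Nat.le_of_dvd (Nat.sub_pos_of_lt hqT) hdvd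
  unfold dyadicPred
  omega

theorem exists_iterate_dyadicSucc_eq_iterate_dyadicPred (q T : ℕ) (hqT : q ≤ T) :
    ∃ m p, dyadicSucc^[m] q = dyadicPred^[p] T := by
  obtain rfl | hlt := hqT.eq_or_lt
  · exact ⟨0, 0, rfl⟩
  obtain hv | hv := le_total (q.factorization 2) (T.factorization 2)
  · obtain ⟨m, p, h⟩ := exists_iterate_dyadicSucc_eq_iterate_dyadicPred _ _ (dyadicSucc_le hlt hv)
    exact ⟨m + 1, p, h⟩
  · obtain ⟨m, p, h⟩ := exists_iterate_dyadicSucc_eq_iterate_dyadicPred _ _ (le_dyadicPred hlt hv)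
    exact ⟨m, p + 1, h⟩
termination_by T - q
decreasing_by
  · exact Nat.sub_lt_sub_left hlt (lt_dyadicSucc q)
  · exact Nat.sub_lt_sub_right (le_dyadicPred hlt hv) (dyadicPred_lt (Nat.ne_zero_of_lt hlt))

/-- The points visited by `m` upward steps from `q` and `p` downward steps from `T`, enumerated from
left to right. It is meant for walks that meet, so that the `m`-th point belongs to both. -/
def cutPoint (q T m p n : ℕ) : ℕ :=
  if n < m then dyadicSucc^[n] q else dyadicPred^[m + p - n] T

/-- The dyadic intervals swept by `m` upward steps from `q` and `p` downward steps from `T`,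
enumerated from left to right and encoded as in `dyadicFrom`. -/
def tile (q T m p n : ℕ) : ℕ × ℕ :=
  if n < m then dyadicFrom (cutPoint q T m p n) else dyadicTo (cutPoint q T m p (n + 1))

lemma cutPoint_of_le (hmeet : dyadicSucc^[m] q = dyadicPred^[p] T) (hn : n ≤ m) :
    cutPoint q T m p n = dyadicSucc^[n] q := by
  obtain hlt | rfl := hn.lt_or_eq
  · exact if_pos hlt
  · rw [cutPoint, if_neg (lt_irrefl n), Nat.add_sub_cancel_left, hmeet]

lemma cutPoint_of_ge (hn : m ≤ n) : cutPoint q T m p n = dyadicPred^[m + p - n] T :=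
  if_neg hn.not_gt

lemma cutPoint_zero (hmeet : dyadicSucc^[m] q = dyadicPred^[p] T) : cutPoint q T m p 0 = q :=
  cutPoint_of_le hmeet m.zero_le

lemma cutPoint_add (q T m p : ℕ) : cutPoint q T m p (m + p) = T := by
  rw [cutPoint_of_ge (Nat.le_add_right m p), Nat.sub_self, Function.iterate_zero_apply]

lemma cutPoint_succ_of_lt (hmeet : dyadicSucc^[m] q = dyadicPred^[p] T) (hn : n < m) :
    cutPoint q T m p (n + 1) = dyadicSucc (cutPoint q T m p n) := by
  rw [cutPoint_of_le hmeet hn, cutPoint_of_le hmeet hn.le, Function.iterate_succ_apply']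

lemma cutPoint_eq_dyadicPred (hmn : m ≤ n) (hn : n < m + p) :
    cutPoint q T m p n = dyadicPred (cutPoint q T m p (n + 1)) := by
  rw [cutPoint_of_ge hmn, cutPoint_of_ge (by omega), ← Function.iterate_succ_apply' dyadicPred]
  congr 2
  omega

lemma le_cutPoint (hmeet : dyadicSucc^[m] q = dyadicPred^[p] T) (n : ℕ) :
    q ≤ cutPoint q T m p n := by
  have hup : Monotone (dyadicSucc^[·] q) := fun _ _ h =>
    Function.monotone_iterate_of_id_le (fun n => (lt_dyadicSucc n).le) h q
  have hdown : Antitone (dyadicPred^[·] T) := fun _ _ h =>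
    Function.antitone_iterate_of_le_id dyadicPred_le h T
  obtain hn | hn := le_total n m
  · rw [cutPoint_of_le hmeet hn]
    exact hup n.zero_le
  · calc
      q ≤ dyadicSucc^[m] q := hup m.zero_le
      _ = dyadicPred^[p] T := hmeet
      _ ≤ dyadicPred^[m + p - n] T := hdown (by omega)
      _ = cutPoint q T m p n := (cutPoint_of_ge hn).symm

lemma tile_lower (hn : n < m + p) :
    (tile q T m p n).2 * 2 ^ (tile q T m p n).1 = cutPoint q T m p n := by
  obtain hnm | hmn := lt_or_ge n m
  · rw [tile, if_pos hnm, dyadicFrom_lower]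
  · rw [tile, if_neg hmn.not_gt, dyadicTo_lower, cutPoint_eq_dyadicPred hmn hn]

lemma tile_upper (hq : 0 < q) (hmeet : dyadicSucc^[m] q = dyadicPred^[p] T) (n : ℕ) :
    ((tile q T m p n).2 + 1) * 2 ^ (tile q T m p n).1 = cutPoint q T m p (n + 1) := by
  obtain hnm | hmn := lt_or_ge n m
  · rw [tile, if_pos hnm, dyadicFrom_upper, cutPoint_succ_of_lt hmeet hnm]
  · rw [tile, if_neg hmn.not_gt, dyadicTo_upper (hq.trans_le (le_cutPoint hmeet _)).ne']

lemma one_le_tile_snd (hq : 0 < q) (hmeet : dyadicSucc^[m] q = dyadicPred^[p] T)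
    (hn : n < m + p) : 1 ≤ (tile q T m p n).2 := by
  have hpos : 0 < (tile q T m p n).2 * 2 ^ (tile q T m p n).1 :=
    (tile_lower hn).symm ▸ hq.trans_le (le_cutPoint hmeet n)
  exact Nat.pos_of_mul_pos_right hpos

lemma two_mul_two_pow_le_of_lt (h : m < n) : 2 * 2 ^ m ≤ 2 ^ n := by
  rw [← pow_succ']
  exact Nat.pow_le_pow_right two_pos h

lemma two_mul_tile_length_le_succ (hq : 0 < q) (hmeet : dyadicSucc^[m] q = dyadicPred^[p] T)
    (hn : n + 1 < m) : 2 * 2 ^ (tile q T m p n).1 ≤ 2 ^ (tile q T m p (n + 1)).1 := by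
  have hnm : n < m := by omega
  rw [tile, tile, if_pos hnm, if_pos hn, cutPoint_succ_of_lt hmeet hnm]
  exact two_mul_two_pow_le_of_lt
    (factorization_two_lt_dyadicSucc (hq.trans_le (le_cutPoint hmeet n)).ne')

lemma two_mul_tile_length_succ_le (hq : 0 < q) (hmeet : dyadicSucc^[m] q = dyadicPred^[p] T)
    (hmn : m ≤ n) (hn : n + 1 < m + p) :
    2 * 2 ^ (tile q T m p (n + 1)).1 ≤ 2 ^ (tile q T m p n).1 := by
  have hpred := cutPoint_eq_dyadicPred (q := q) (T := T) (hmn.trans n.le_succ) hn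
  have hpos : cutPoint q T m p (n + 1) ≠ 0 := (hq.trans_le (le_cutPoint hmeet _)).ne'
  rw [tile, tile, if_neg (by omega), if_neg hmn.not_gt, hpred]
  exact two_mul_two_pow_le_of_lt (factorization_two_lt_dyadicPred (hpred ▸ hpos))

end Walks

/-- **Interval partition lemma.**  Any integer interval `[q, s]` with `1 ≤ q ≤ s`
can be partitioned into two finite sequences of disjoint, consecutive dyadic
intervals `(I_{−m}, …, I_0)` and `(I_1, …, I_p)` covering `[q, s]` in
left-to-right order, such that `|I_{−i}|/|I_{−i+1}| ≤ 1/2` for all `i ≥ 1` and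
`|I_i|/|I_{i−1}| ≤ 1/2` for all `i ≥ 2`.  Here the interval with index `i`
(for `−m ≤ i ≤ p`) is `[(J i).2 · 2^(J i).1, ((J i).2 + 1) · 2^(J i).1 − 1]`,
of length `2 ^ (J i).1`. -/
theorem dyadic_interval_partition (q s : ℕ) (hq : 1 ≤ q) (hqs : q ≤ s) :
    ∃ (m p : ℕ) (J : ℤ → ℕ × ℕ),
      -- each member of both sequences is a genuine dyadic interval (`k ≥ 1`)
      (∀ i : ℤ, -(m : ℤ) ≤ i → i ≤ (p : ℤ) → 1 ≤ (J i).2) ∧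
      -- the leftmost interval starts at `q`
      (J (-(m : ℤ))).2 * 2 ^ (J (-(m : ℤ))).1 = q ∧
      -- the rightmost interval ends at `s`
      ((J (p : ℤ)).2 + 1) * 2 ^ (J (p : ℤ)).1 - 1 = s ∧
      -- the intervals are consecutive (hence disjoint and covering `[q, s]`
      -- in left-to-right order)
      (∀ i : ℤ, -(m : ℤ) ≤ i → i < (p : ℤ) →
        (J (i + 1)).2 * 2 ^ (J (i + 1)).1 = ((J i).2 + 1) * 2 ^ (J i).1) ∧
      -- `|I_{−i}| / |I_{−i+1}| ≤ 1/2` for all `i ≥ 1`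
      (∀ i : ℤ, -(m : ℤ) ≤ i → i ≤ -1 → 2 * 2 ^ (J i).1 ≤ 2 ^ (J (i + 1)).1) ∧
      -- `|I_i| / |I_{i−1}| ≤ 1/2` for all `i ≥ 2`
      (∀ i : ℤ, 2 ≤ i → i ≤ (p : ℤ) → 2 * 2 ^ (J i).1 ≤ 2 ^ (J (i - 1)).1) := by
  obtain ⟨m, p, hmeet⟩ := exists_iterate_dyadicSucc_eq_iterate_dyadicPred q (s + 1) (by omega)
  have hsteps : 0 < m + p := by
    by_contra! h
    obtain ⟨rfl, rfl⟩ : m = 0 ∧ p = 0 := by omega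
    exact (Nat.lt_succ_of_le hqs).ne hmeet
  -- `I_0` is the last upward tile or, if there is none (`m - 1 = 0` for `m = 0`), the first tile.
  let J : ℤ → ℕ × ℕ := fun i => tile q (s + 1) m p (i + (m - 1 : ℕ)).toNat
  have hJ (n : ℕ) (i : ℤ) (h : i + (m - 1 : ℕ) = n) : J i = tile q (s + 1) m p n := by
    simp only [J, h, Int.toNat_natCast]
  refine ⟨m - 1, m + p - 1 - (m - 1), J, fun i _ hi' => ?_, ?_, ?_, fun i hi hi' => ?_,
    fun i hi hi' => ?_, fun i hi hi' => ?_⟩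
  · exact one_le_tile_snd hq hmeet (by omega)
  · rw [hJ 0 _ (by omega), tile_lower hsteps, cutPoint_zero hmeet]
  · rw [hJ (m + p - 1) _ (by omega), tile_upper hq hmeet, Nat.sub_add_cancel hsteps, cutPoint_add,
      Nat.add_sub_cancel]
  · obtain ⟨n, hn⟩ := Int.eq_ofNat_of_zero_le (a := i + (m - 1 : ℕ)) (by omega)
    rw [hJ n i hn, hJ (n + 1) _ (by omega), tile_lower (by omega), tile_upper hq hmeet]
  · obtain ⟨n, hn⟩ := Int.eq_ofNat_of_zero_le (a := i + (m - 1 : ℕ)) (by omega)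
    rw [hJ n i hn, hJ (n + 1) _ (by omega)]
    exact two_mul_tile_length_le_succ hq hmeet (by omega)
  · obtain ⟨n, hn⟩ := Int.eq_ofNat_of_zero_le (a := i - 1 + (m - 1 : ℕ)) (by omega)
    rw [hJ (n + 1) i (by omega), hJ n _ hn]
    exact two_mul_tile_length_succ_le hq hmeet (by omega) (by omega)
end
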